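/- arXiv:1807.05801 — 6 statements merged into one kernel-verified Lean document; each statement's English description precedes it below -/
import Mathlib

section
/- Let (X_t)_{t∈ℝ} be a strictly stationary ℝ^n-valued process on a probability space with E[‖X_0‖^p]^{1/p} ≤ C for some constant C > 0 and some p > 1. Let h : ℝ^n → ℝ^m satisfy the growth–Lipschitz condition with constants c > 0 and a, where 1 ≤ a < p, and define Y_t = h(X_t). If (X_t)_{t∈ℝ} is η-weakly dependent with coefficients (η_X(r))_{r≥0}, then (Y_t)_{t∈ℝ} is η-weakly dependent with coefficients η_Y(r) = 𝒞 · η_X(r)^{(p−a)/(p−1)} for some constant 𝒞 ≥ 0 independent of r. -/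
open MeasureTheory ProbabilityTheory Filter

noncomputable section

/-- Covariance of two real-valued random variables. -/
def cov {Ω : Type*} [MeasurableSpace Ω] (μ : Measure Ω) (U V : Ω → ℝ) : ℝ :=
  (∫ ω, U ω * V ω ∂μ) - (∫ ω, U ω ∂μ) * (∫ ω, V ω ∂μ)

/-- `L` is a (nonnegative) Lipschitz bound for `F` with respect to the distance
`δ₁(x,y) = ∑ i ‖x i - y i‖` on `Eᵘ`. -/
def Delta1Lip {E : Type*} [NormedAddCommGroup E] {u : ℕ} (F : (Fin u → E) → ℝ) (L : ℝ) : Prop :=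
  0 ≤ L ∧ ∀ x y : Fin u → E, |F x - F y| ≤ L * ∑ i, ‖x i - y i‖

/-- η-weak dependence of a process with coefficients `η` and constant `c₀`: `η r → 0` and the
covariance of Lipschitz functionals of the past and the future, separated by a time gap `r`,
is controlled by `c₀ (u Lip(F) + v Lip(G)) η(r)`. -/
def EtaWeaklyDependent {Ω : Type*} [MeasurableSpace Ω] (μ : Measure Ω)
    {E : Type*} [NormedAddCommGroup E] [MeasurableSpace E]
    (X : ℝ → Ω → E) (η : ℝ → ℝ) (c₀ : ℝ) : Prop :=
  0 ≤ c₀ ∧ (∀ r, 0 ≤ η r) ∧ Tendsto η atTop (nhds 0) ∧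
    ∀ (u v : ℕ), 0 < u → 0 < v → ∀ r : ℝ, 0 ≤ r →
      ∀ (i : Fin u → ℝ) (j : Fin v → ℝ), Monotone i → Monotone j →
        (∀ a b, i a + r ≤ j b) →
        ∀ (F : (Fin u → E) → ℝ) (G : (Fin v → E) → ℝ) (LF LG : ℝ),
          Measurable F → Measurable G →
          (∀ x, |F x| ≤ 1) → (∀ x, |G x| ≤ 1) →
          Delta1Lip F LF → Delta1Lip G LG →
          |cov μ (fun ω => F fun a => X (i a) ω) (fun ω => G fun b => X (j b) ω)| ≤
            c₀ * ((u : ℝ) * LF + (v : ℝ) * LG) * η r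

/-- Strict stationarity of an `ℝ`-indexed process: shifted finite-dimensional marginals have
the same distribution. -/
def StrictlyStationary {Ω : Type*} [MeasurableSpace Ω] (μ : Measure Ω)
    {E : Type*} [MeasurableSpace E] (X : ℝ → Ω → E) : Prop :=
  ∀ (s : ℝ) (u : ℕ) (t : Fin u → ℝ),
    IdentDistrib (fun ω (a : Fin u) => X (t a + s) ω) (fun ω (a : Fin u) => X (t a) ω) μ μ

/-- The growth–Lipschitz condition with constants `c` and `a`:
`h 0 = 0` and `‖h x - h y‖ ≤ c ‖x - y‖ (1 + ‖x‖^(a-1) + ‖y‖^(a-1))`. -/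
def GrowthLip {n m : ℕ} (h : EuclideanSpace ℝ (Fin n) → EuclideanSpace ℝ (Fin m))
    (c a : ℝ) : Prop :=
  h 0 = 0 ∧ ∀ x y, ‖h x - h y‖ ≤ c * ‖x - y‖ * (1 + ‖x‖ ^ (a - 1) + ‖y‖ ^ (a - 1))

lemma aux_integral_abs_le_one {Ω : Type*} [MeasurableSpace Ω] (μ : Measure Ω)
    [IsProbabilityMeasure μ] (U : Ω → ℝ) (hU : ∀ ω, |U ω| ≤ 1) : |∫ ω, U ω ∂μ| ≤ 1 := by
  have := norm_integral_le_of_norm_le_const (μ := μ) (f := U) (C := 1)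
    (Eventually.of_forall fun ω => by simpa using hU ω)
  simpa using this

lemma aux_integrable {Ω : Type*} [MeasurableSpace Ω] (μ : Measure Ω)
    [IsProbabilityMeasure μ] (U : Ω → ℝ) (hm : Measurable U) (hU : ∀ ω, |U ω| ≤ 1) :
    Integrable U μ :=
  Integrable.of_bound hm.aestronglyMeasurable 1
    (Eventually.of_forall fun ω => by simpa using hU ω)

lemma aux_mul_diff (x y x' y' : ℝ) (hy : |y| ≤ 1) (hx' : |x'| ≤ 1) :
    |x * y - x' * y'| ≤ |x - x'| + |y - y'| := by
  have e : x * y - x' * y' = (x - x') * y + x' * (y - y') := by ring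
  rw [e]
  refine (abs_add_le _ _).trans ?_
  rw [abs_mul, abs_mul]
  have h1 := mul_le_mul_of_nonneg_left hy (abs_nonneg (x - x'))
  have h2 := mul_le_mul_of_nonneg_right hx' (abs_nonneg (y - y'))
  linarith

lemma aux_cov_diff {Ω : Type*} [MeasurableSpace Ω] (μ : Measure Ω)
    [IsProbabilityMeasure μ] (U V U' V' : Ω → ℝ)
    (mU : Measurable U) (mV : Measurable V) (mU' : Measurable U') (mV' : Measurable V')
    (hU : ∀ ω, |U ω| ≤ 1) (hV : ∀ ω, |V ω| ≤ 1) (hU' : ∀ ω, |U' ω| ≤ 1) (hV' : ∀ ω, |V' ω| ≤ 1)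
    (A B : ℝ) (hA : ∫ ω, |U ω - U' ω| ∂μ ≤ A) (hB : ∫ ω, |V ω - V' ω| ∂μ ≤ B) :
    |cov μ U V| ≤ |cov μ U' V'| + 2 * (A + B) := by
  have iU := aux_integrable μ U mU hU
  have iV := aux_integrable μ V mV hV
  have iU' := aux_integrable μ U' mU' hU'
  have iV' := aux_integrable μ V' mV' hV'
  have iUV := aux_integrable μ (fun ω => U ω * V ω) (mU.mul mV) (fun ω => by
    rw [abs_mul]; exact mul_le_one₀ (hU ω) (abs_nonneg _) (hV ω))
  have iUV' := aux_integrable μ (fun ω => U' ω * V' ω) (mU'.mul mV') (fun ω => by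
    rw [abs_mul]; exact mul_le_one₀ (hU' ω) (abs_nonneg _) (hV' ω))
  have iA : Integrable (fun ω => |U ω - U' ω|) μ := (iU.sub iU').abs
  have iB : Integrable (fun ω => |V ω - V' ω|) μ := (iV.sub iV').abs
  have h1 : |(∫ ω, U ω * V ω ∂μ) - ∫ ω, U' ω * V' ω ∂μ| ≤ A + B := by
    rw [← integral_sub iUV iUV']
    refine (abs_integral_le_integral_abs).trans ?_
    calc _ ≤ ∫ ω, (|U ω - U' ω| + |V ω - V' ω|) ∂μ :=
          integral_mono (iUV.sub iUV').abs (iA.add iB)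
            (fun ω => aux_mul_diff _ _ _ _ (hV ω) (hU' ω))
      _ = _ := integral_add iA iB
      _ ≤ A + B := add_le_add hA hB
  have h2 : |(∫ ω, U ω ∂μ) * (∫ ω, V ω ∂μ) - (∫ ω, U' ω ∂μ) * (∫ ω, V' ω ∂μ)| ≤ A + B := by
    refine (aux_mul_diff _ _ _ _ (aux_integral_abs_le_one μ V hV)
      (aux_integral_abs_le_one μ U' hU')).trans ?_
    rw [← integral_sub iU iU', ← integral_sub iV iV']
    exact add_le_add (abs_integral_le_integral_abs.trans hA)
      (abs_integral_le_integral_abs.trans hB)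
  unfold cov
  rw [abs_le] at h1 h2
  rcases abs_cases ((∫ ω, U ω * V ω ∂μ) - (∫ ω, U ω ∂μ) * (∫ ω, V ω ∂μ)) with h3 | h3 <;>
  rcases abs_cases ((∫ ω, U' ω * V' ω ∂μ) - (∫ ω, U' ω ∂μ) * (∫ ω, V' ω ∂μ)) with h4 | h4 <;>
  linarith [h1.1, h1.2, h2.1, h2.2]

/-- Radial truncation at level `M`. -/
def trunc {E : Type*} [NormedAddCommGroup E] [NormedSpace ℝ E] (M : ℝ) (x : E) : E :=
  (M / max M ‖x‖) • x

lemma trunc_of_le {E : Type*} [NormedAddCommGroup E] [NormedSpace ℝ E] {M : ℝ} (hM : 0 < M)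
    {x : E} (hx : ‖x‖ ≤ M) : trunc M x = x := by
  rw [trunc, max_eq_left hx, div_self hM.ne', one_smul]

lemma trunc_norm_le {E : Type*} [NormedAddCommGroup E] [NormedSpace ℝ E] {M : ℝ} (hM : 0 < M)
    (x : E) : ‖trunc M x‖ ≤ M := by
  have hs : 0 < max M ‖x‖ := lt_max_of_lt_left hM
  rw [trunc, norm_smul, Real.norm_of_nonneg (by positivity), div_mul_eq_mul_div, div_le_iff₀ hs]
  exact mul_le_mul_of_nonneg_left (le_max_right _ _) hM.le

lemma trunc_sub_norm_le {E : Type*} [NormedAddCommGroup E] [NormedSpace ℝ E] {M : ℝ} (hM : 0 < M)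
    (x : E) : ‖x - trunc M x‖ ≤ ‖x‖ := by
  have hs : 0 < max M ‖x‖ := lt_max_of_lt_left hM
  have e : x - trunc M x = (1 - M / max M ‖x‖) • x := by rw [trunc, sub_smul, one_smul]
  have h1 : M / max M ‖x‖ ≤ 1 := (div_le_one hs).2 (le_max_left _ _)
  have h0 : 0 ≤ M / max M ‖x‖ := by positivity
  rw [e, norm_smul, Real.norm_of_nonneg (by linarith)]
  exact mul_le_of_le_one_left (norm_nonneg _) (by linarith)

lemma trunc_lip {E : Type*} [NormedAddCommGroup E] [NormedSpace ℝ E] {M : ℝ} (hM : 0 < M)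
    (x y : E) : ‖trunc M x - trunc M y‖ ≤ 2 * ‖x - y‖ := by
  have hs : 0 < max M ‖x‖ := lt_max_of_lt_left hM
  have ht : 0 < max M ‖y‖ := lt_max_of_lt_left hM
  have hMs : M / max M ‖x‖ ≤ 1 := (div_le_one hs).2 (le_max_left _ _)
  have hMs0 : 0 ≤ M / max M ‖x‖ := by positivity
  have hyt : ‖y‖ / max M ‖y‖ ≤ 1 := (div_le_one ht).2 (le_max_right _ _)
  have hyt0 : 0 ≤ ‖y‖ / max M ‖y‖ := by positivity
  have hst : |max M ‖y‖ - max M ‖x‖| ≤ ‖x - y‖ := by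
    refine (abs_max_sub_max_le_max _ _ _ _).trans ?_
    rw [sub_self, abs_zero, max_eq_right (abs_nonneg _), abs_sub_comm]
    exact abs_norm_sub_norm_le x y
  have e : trunc M x - trunc M y = (M / max M ‖x‖) • (x - y) +
      (M / max M ‖x‖ - M / max M ‖y‖) • y := by
    rw [trunc, trunc, smul_sub, sub_smul]; abel
  have e2 : |M / max M ‖x‖ - M / max M ‖y‖| * ‖y‖
      = (M / max M ‖x‖) * (‖y‖ / max M ‖y‖) * |max M ‖y‖ - max M ‖x‖| := by
    have : M / max M ‖x‖ - M / max M ‖y‖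
        = (M / max M ‖x‖) * ((max M ‖y‖)⁻¹) * (max M ‖y‖ - max M ‖x‖) := by
      field_simp
    rw [this, abs_mul, abs_of_nonneg (by positivity : 0 ≤ (M / max M ‖x‖) * ((max M ‖y‖)⁻¹))]
    ring
  rw [e]
  refine (norm_add_le _ _).trans ?_
  rw [norm_smul, norm_smul, Real.norm_eq_abs, Real.norm_eq_abs, e2, abs_of_nonneg hMs0]
  have k1 : M / max M ‖x‖ * ‖x - y‖ ≤ ‖x - y‖ := mul_le_of_le_one_left (norm_nonneg _) hMs
  have k2 : (M / max M ‖x‖) * (‖y‖ / max M ‖y‖) * |max M ‖y‖ - max M ‖x‖| ≤ ‖x - y‖ :=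
    (mul_le_of_le_one_left (abs_nonneg _) (mul_le_one₀ hMs hyt0 hyt)).trans hst
  linarith

lemma trunc_continuous {E : Type*} [NormedAddCommGroup E] [NormedSpace ℝ E] {M : ℝ} (hM : 0 < M) :
    Continuous (trunc M : E → E) := by
  unfold trunc
  refine Continuous.smul (Continuous.div continuous_const (by fun_prop) ?_) continuous_id
  intro x
  exact (lt_max_of_lt_left hM).ne'

lemma growthLip_continuous {n m : ℕ}
    {h : EuclideanSpace ℝ (Fin n) → EuclideanSpace ℝ (Fin m)} {c a : ℝ} (ha : 1 ≤ a)
    (hGL : GrowthLip h c a) : Continuous h := by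
  rw [continuous_iff_continuousAt]
  intro x
  rw [ContinuousAt, tendsto_iff_norm_sub_tendsto_zero]
  have hc : Continuous fun y : EuclideanSpace ℝ (Fin n) =>
      c * ‖y - x‖ * (1 + ‖y‖ ^ (a - 1) + ‖x‖ ^ (a - 1)) := by
    have : Continuous fun y : EuclideanSpace ℝ (Fin n) => ‖y‖ ^ (a - 1) :=
      continuous_norm.rpow_const (fun _ => Or.inr (by linarith))
    fun_prop
  have ht := hc.tendsto x
  simp only [sub_self, norm_zero, mul_zero, zero_mul] at ht
  exact squeeze_zero (fun _ => norm_nonneg _) (fun y => hGL.2 y x) ht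

lemma growthLip_trunc_lip {n m : ℕ}
    {h : EuclideanSpace ℝ (Fin n) → EuclideanSpace ℝ (Fin m)} {c a : ℝ} (hc : 0 < c) (ha : 1 ≤ a)
    (hGL : GrowthLip h c a) {M : ℝ} (hM : 1 ≤ M) (x y : EuclideanSpace ℝ (Fin n)) :
    ‖h (trunc M x) - h (trunc M y)‖ ≤ 6 * c * M ^ (a - 1) * ‖x - y‖ := by
  have hM0 : 0 < M := by linarith
  have ha' : 0 ≤ a - 1 := by linarith
  have h1 : 1 ≤ M ^ (a - 1) := Real.one_le_rpow hM ha'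
  have h2 := Real.rpow_le_rpow (norm_nonneg _) (trunc_norm_le hM0 x) ha'
  have h3 := Real.rpow_le_rpow (norm_nonneg _) (trunc_norm_le hM0 y) ha'
  calc _ ≤ _ := hGL.2 _ _
    _ ≤ c * (2 * ‖x - y‖) * (3 * M ^ (a - 1)) := by
        refine mul_le_mul (mul_le_mul_of_nonneg_left (trunc_lip hM0 x y) hc.le) (by linarith)
          (by positivity) (by positivity)
    _ = _ := by ring

lemma growthLip_trunc_err {n m : ℕ}
    {h : EuclideanSpace ℝ (Fin n) → EuclideanSpace ℝ (Fin m)} {c a p : ℝ} (hc : 0 < c)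
    (ha : 1 ≤ a) (hap : a < p)
    (hGL : GrowthLip h c a) {M : ℝ} (hM : 1 ≤ M) (x : EuclideanSpace ℝ (Fin n)) :
    ‖h x - h (trunc M x)‖ ≤ 3 * c * M ^ (a - p) * ‖x‖ ^ p := by
  have hM0 : 0 < M := by linarith
  have ha' : 0 ≤ a - 1 := by linarith
  rcases le_or_gt ‖x‖ M with hx | hx
  · rw [trunc_of_le hM0 hx, sub_self, norm_zero]; positivity
  · have hx0 : 0 < ‖x‖ := by linarith
    have h1 : 1 ≤ ‖x‖ ^ (a - 1) := Real.one_le_rpow (by linarith) ha'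
    have h2 := Real.rpow_le_rpow (norm_nonneg _) ((trunc_norm_le hM0 x).trans hx.le) ha'
    have h3 : ‖x‖ ^ (a - p) ≤ M ^ (a - p) :=
      Real.rpow_le_rpow_of_nonpos hM0 hx.le (by linarith)
    have e1 : ‖x‖ * ‖x‖ ^ (a - 1) = ‖x‖ ^ (a - p) * ‖x‖ ^ p := by
      rw [← Real.rpow_add hx0, ← Real.rpow_one_add' hx0.le (by linarith)]; congr 1; ring
    calc _ ≤ _ := hGL.2 _ _
      _ ≤ c * ‖x‖ * (3 * ‖x‖ ^ (a - 1)) := by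
          refine mul_le_mul (mul_le_mul_of_nonneg_left (trunc_sub_norm_le hM0 x) hc.le)
            (by linarith) (by positivity) (by positivity)
      _ = 3 * c * (‖x‖ ^ (a - p) * ‖x‖ ^ p) := by rw [← e1]; ring
      _ ≤ 3 * c * (M ^ (a - p) * ‖x‖ ^ p) := by gcongr
      _ = _ := by ring

lemma growthLip_zero_err {n m : ℕ}
    {h : EuclideanSpace ℝ (Fin n) → EuclideanSpace ℝ (Fin m)} {c a p : ℝ} (hc : 0 < c)
    (ha : 1 ≤ a) (hap : a < p)
    (hGL : GrowthLip h c a) (x : EuclideanSpace ℝ (Fin n)) :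
    ‖h x - h 0‖ ≤ 3 * c * (1 + ‖x‖ ^ p) := by
  have key : ∀ q : ℝ, 0 < q → q ≤ p → ‖x‖ ^ q ≤ 1 + ‖x‖ ^ p := by
    intro q hq hqp
    have hp0 : 0 ≤ ‖x‖ ^ p := by positivity
    rcases le_or_gt ‖x‖ 1 with hx | hx
    · have := Real.rpow_le_one (norm_nonneg x) hx hq.le
      linarith
    · have := Real.rpow_le_rpow_of_exponent_le hx.le hqp
      linarith
  have k1 := key 1 one_pos (by linarith)
  have k2 := key a (by linarith) hap.le
  rw [Real.rpow_one] at k1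
  have e1 : ‖x‖ * ‖x‖ ^ (a - 1) = ‖x‖ ^ a := by
    rw [← Real.rpow_one_add' (norm_nonneg x) (by linarith)]; congr 1; ring
  have k3 : (0 : ℝ) ^ (a - 1) ≤ 1 := Real.rpow_le_one le_rfl zero_le_one (by linarith)
  have k4 := hGL.2 x 0
  rw [sub_zero, norm_zero] at k4
  refine k4.trans ?_
  have k5 : ‖x‖ * (0 : ℝ) ^ (a - 1) ≤ ‖x‖ := mul_le_of_le_one_right (norm_nonneg _) k3
  have : ‖x‖ * (1 + ‖x‖ ^ (a - 1) + 0 ^ (a - 1)) ≤ 3 * (1 + ‖x‖ ^ p) := by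
    rw [mul_add, mul_add, e1]; linarith
  calc _ = c * (‖x‖ * (1 + ‖x‖ ^ (a - 1) + 0 ^ (a - 1))) := by ring
    _ ≤ c * (3 * (1 + ‖x‖ ^ p)) := mul_le_mul_of_nonneg_left this hc.le
    _ = _ := by ring

/-- Replacing `h` by `h ∘ φ` in a Lipschitz functional. -/
lemma aux_replace {Ω : Type*} [MeasurableSpace Ω] (μ : Measure Ω) [IsProbabilityMeasure μ]
    {n m : ℕ} (X : ℝ → Ω → EuclideanSpace ℝ (Fin n)) (hXmeas : ∀ t, Measurable (X t))
    (h g : EuclideanSpace ℝ (Fin n) → EuclideanSpace ℝ (Fin m))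
    (mh : Measurable h) (mg : Measurable g) (w : EuclideanSpace ℝ (Fin n) → ℝ)
    (hw : ∀ x, ‖h x - g x‖ ≤ w x) (B : ℝ) (iw : ∀ t, Integrable (fun ω => w (X t ω)) μ)
    (hB : ∀ t, ∫ ω, w (X t ω) ∂μ ≤ B)
    (u : ℕ) (i : Fin u → ℝ) (F : (Fin u → EuclideanSpace ℝ (Fin m)) → ℝ) (L : ℝ)
    (mF : Measurable F) (bF : ∀ x, |F x| ≤ 1) (lF : Delta1Lip F L) :
    ∫ ω, |F (fun a => h (X (i a) ω)) - F (fun a => g (X (i a) ω))| ∂μ ≤ (u : ℝ) * L * B := by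
  have m1 : Measurable fun ω => F (fun a => h (X (i a) ω)) :=
    mF.comp (measurable_pi_lambda _ fun a => mh.comp (hXmeas _))
  have m2 : Measurable fun ω => F (fun a => g (X (i a) ω)) :=
    mF.comp (measurable_pi_lambda _ fun a => mg.comp (hXmeas _))
  have i1 := aux_integrable μ _ m1 (fun ω => bF _)
  have i2 := aux_integrable μ _ m2 (fun ω => bF _)
  calc _ ≤ ∫ ω, L * ∑ a, w (X (i a) ω) ∂μ := by
        refine integral_mono (i1.sub i2).abs
          ((integrable_finsetSum _ fun a _ => iw (i a)).const_mul L) fun ω => ?_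
        exact (lF.2 _ _).trans (mul_le_mul_of_nonneg_left
          (Finset.sum_le_sum fun a _ => hw _) lF.1)
    _ = L * ∑ a, ∫ ω, w (X (i a) ω) ∂μ := by
        rw [integral_const_mul, integral_finsetSum _ fun a _ => iw (i a)]
    _ ≤ L * ∑ a : Fin u, B :=
        mul_le_mul_of_nonneg_left (Finset.sum_le_sum fun a _ => hB _) lF.1
    _ = _ := by simp; ring

/-- Hereditary property of η-weak dependence under a growth–Lipschitz transformation
(Proposition 2.8 of Curato–Stelzer). -/
theorem eta_hereditary_growthLip
    {Ω : Type*} [MeasurableSpace Ω] (μ : Measure Ω) [IsProbabilityMeasure μ]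
    {n m : ℕ} (X : ℝ → Ω → EuclideanSpace ℝ (Fin n))
    (hXmeas : ∀ t, Measurable (X t))
    (hstat : StrictlyStationary μ X)
    (p C : ℝ) (hp : 1 < p) (hC : 0 < C)
    (hint : Integrable (fun ω => ‖X 0 ω‖ ^ p) μ)
    (hmom : (∫ ω, ‖X 0 ω‖ ^ p ∂μ) ^ (1 / p) ≤ C)
    (h : EuclideanSpace ℝ (Fin n) → EuclideanSpace ℝ (Fin m))
    (c a : ℝ) (hc : 0 < c) (ha : 1 ≤ a) (hap : a < p)
    (hGL : GrowthLip h c a)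
    (ηX : ℝ → ℝ) (c₀ : ℝ)
    (hX : EtaWeaklyDependent μ X ηX c₀) :
    ∃ C' c₁ : ℝ, 0 ≤ C' ∧
      EtaWeaklyDependent μ (fun t ω => h (X t ω))
        (fun r => C' * ηX r ^ ((p - a) / (p - 1))) c₁ := by
  obtain ⟨hc₀, hη0, hηt, hdep⟩ := hX
  have hD0 : 0 ≤ ∫ ω, ‖X 0 ω‖ ^ p ∂μ := integral_nonneg fun ω => by positivity
  have hid : ∀ t, IdentDistrib (fun ω => ‖X t ω‖ ^ p) (fun ω => ‖X 0 ω‖ ^ p) μ μ := by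
    intro t
    have h1 := hstat t 1 (fun _ => 0)
    have h2 := h1.comp (u := fun x : Fin 1 → EuclideanSpace ℝ (Fin n) => ‖x 0‖ ^ p)
      (((measurable_pi_apply 0).norm).pow_const p)
    simpa [Function.comp_def] using h2
  have hit : ∀ t, Integrable (fun ω => ‖X t ω‖ ^ p) μ := fun t => (hid t).integrable_iff.2 hint
  have hDt : ∀ t, ∫ ω, ‖X t ω‖ ^ p ∂μ = ∫ ω, ‖X 0 ω‖ ^ p ∂μ := fun t => (hid t).integral_eq
  set D := ∫ ω, ‖X 0 ω‖ ^ p ∂μ with hD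
  have ch : Continuous h := growthLip_continuous ha hGL
  have hθ : 0 < (p - a) / (p - 1) := div_pos (by linarith) (by linarith)
  refine ⟨6 * c * (1 + D) + 6 * c * c₀, 1, by positivity, zero_le_one, ?_, ?_, ?_⟩
  · intro r
    have := hη0 r
    positivity
  · have h1 := (hηt.rpow_const (p := (p - a) / (p - 1)) (Or.inr hθ.le)).const_mul
      (6 * c * (1 + D) + 6 * c * c₀)
    simpa [Real.zero_rpow hθ.ne'] using h1
  intro u v hu hv r hr i j hi hj hij F G LF LG mF mG bF bG lF lG
  have hLF := lF.1
  have hLG := lG.1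
  set S : ℝ := (u : ℝ) * LF + (v : ℝ) * LG with hS
  have hS0 : 0 ≤ S := by positivity
  have hη := hη0 r
  -- replacement
  have rep : ∀ (g : EuclideanSpace ℝ (Fin n) → EuclideanSpace ℝ (Fin m)) (_ : Measurable g)
      (w : EuclideanSpace ℝ (Fin n) → ℝ) (_ : ∀ x, ‖h x - g x‖ ≤ w x) (B : ℝ)
      (_ : ∀ t, Integrable (fun ω => w (X t ω)) μ) (_ : ∀ t, ∫ ω, w (X t ω) ∂μ ≤ B),
      |cov μ (fun ω => F fun a => h (X (i a) ω)) (fun ω => G fun b => h (X (j b) ω))| ≤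
      |cov μ (fun ω => F fun a => g (X (i a) ω)) (fun ω => G fun b => g (X (j b) ω))|
        + 2 * (S * B) := by
    intro g mg w hw B iw hB
    have e1 := aux_replace μ X hXmeas h g ch.measurable mg w hw B iw hB u i F LF mF bF lF
    have e2 := aux_replace μ X hXmeas h g ch.measurable mg w hw B iw hB v j G LG mG bG lG
    have e3 := aux_cov_diff μ (fun ω => F fun a => h (X (i a) ω))
      (fun ω => G fun b => h (X (j b) ω)) (fun ω => F fun a => g (X (i a) ω))
      (fun ω => G fun b => g (X (j b) ω))
      (mF.comp (measurable_pi_lambda _ fun a => ch.measurable.comp (hXmeas _)))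
      (mG.comp (measurable_pi_lambda _ fun a => ch.measurable.comp (hXmeas _)))
      (mF.comp (measurable_pi_lambda _ fun a => mg.comp (hXmeas _)))
      (mG.comp (measurable_pi_lambda _ fun a => mg.comp (hXmeas _)))
      (fun _ => bF _) (fun _ => bG _) (fun _ => bF _) (fun _ => bG _) _ _ e1 e2
    refine e3.trans (le_of_eq ?_)
    rw [hS]; ring
  have bnd : ∀ M : ℝ, 1 ≤ M →
      |cov μ (fun ω => F fun a => h (X (i a) ω)) (fun ω => G fun b => h (X (j b) ω))| ≤
      S * (6 * c * D * M ^ (a - p) + 6 * c * c₀ * (M ^ (a - 1) * ηX r)) := by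
    intro M hM
    have hM0 : 0 < M := by linarith
    have mT : Measurable (trunc M : EuclideanSpace ℝ (Fin n) → _) :=
      (trunc_continuous hM0).measurable
    have e1 := rep (fun x => h (trunc M x)) (ch.measurable.comp mT)
      (fun x => 3 * c * M ^ (a - p) * ‖x‖ ^ p) (growthLip_trunc_err hc ha hap hGL hM)
      (3 * c * M ^ (a - p) * D) (fun t => (hit t).const_mul _)
      (fun t => by rw [integral_const_mul, hDt t])
    have lipc : ∀ (k : ℕ) (H : (Fin k → EuclideanSpace ℝ (Fin m)) → ℝ) (L : ℝ), Delta1Lip H L →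
        Delta1Lip (fun x : Fin k → EuclideanSpace ℝ (Fin n) => H fun a => h (trunc M (x a)))
          (L * (6 * c * M ^ (a - 1))) := by
      intro k H L hH
      have := hH.1
      refine ⟨by positivity, fun x y => (hH.2 _ _).trans ?_⟩
      rw [mul_assoc L, Finset.mul_sum Finset.univ _ (6 * c * M ^ (a - 1))]
      exact mul_le_mul_of_nonneg_left
        (Finset.sum_le_sum fun b _ => growthLip_trunc_lip hc ha hGL hM _ _) this
    have mc : ∀ (k : ℕ) (H : (Fin k → EuclideanSpace ℝ (Fin m)) → ℝ), Measurable H →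
        Measurable (fun x : Fin k → EuclideanSpace ℝ (Fin n) => H fun a => h (trunc M (x a))) :=
      fun k H mH => mH.comp (measurable_pi_lambda _ fun b =>
        ch.measurable.comp (mT.comp (measurable_pi_apply b)))
    have e2 := hdep u v hu hv r hr i j hi hj hij
      (fun x => F fun a => h (trunc M (x a))) (fun x => G fun a => h (trunc M (x a)))
      _ _ (mc u F mF) (mc v G mG) (fun _ => bF _) (fun _ => bG _) (lipc u F LF lF) (lipc v G LG lG)
    refine (e1.trans (add_le_add_left e2 _)).trans (le_of_eq ?_)
    rw [hS]; ring
  have goal' : |cov μ (fun ω => F fun a => h (X (i a) ω)) (fun ω => G fun b => h (X (j b) ω))| ≤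
      S * ((6 * c * (1 + D) + 6 * c * c₀) * ηX r ^ ((p - a) / (p - 1))) := by
    rcases hη.eq_or_lt with h0 | hpos
    · rw [← h0, Real.zero_rpow hθ.ne', mul_zero, mul_zero]
      have ht : Tendsto (fun M : ℝ => S * (6 * c * D * M ^ (a - p))) atTop (nhds 0) := by
        have h1 := tendsto_rpow_neg_atTop (y := p - a) (by linarith)
        rw [neg_sub] at h1
        simpa using (h1.const_mul (6 * c * D)).const_mul S
      refine ge_of_tendsto ht ?_
      filter_upwards [eventually_ge_atTop 1] with M hM
      have := bnd M hM
      rwa [← h0, mul_zero, mul_zero, add_zero] at this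
    rcases le_or_gt (ηX r) 1 with h1 | h1
    · have hp1 : p - 1 ≠ 0 := by linarith
      have hb := bnd (ηX r ^ (-1 / (p - 1)))
        (Real.one_le_rpow_of_pos_of_le_one_of_nonpos hpos h1
          (div_nonpos_of_nonpos_of_nonneg (by norm_num) (by linarith)))
      rw [← Real.rpow_mul hη, ← Real.rpow_mul hη] at hb
      have x1 : -1 / (p - 1) * (a - p) = (p - a) / (p - 1) := by ring
      have x2 : ηX r ^ (-1 / (p - 1) * (a - 1)) * ηX r = ηX r ^ ((p - a) / (p - 1)) := by
        nth_rewrite 2 [← Real.rpow_one (ηX r)]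
        rw [← Real.rpow_add hpos]
        congr 1
        field_simp
        ring
      rw [x1, x2] at hb
      refine hb.trans (mul_le_mul_of_nonneg_left ?_ hS0)
      have : 0 ≤ c * ηX r ^ ((p - a) / (p - 1)) := by positivity
      nlinarith
    · have e1 := rep (fun _ => h 0) measurable_const
        (fun x => 3 * c * (1 + ‖x‖ ^ p)) (growthLip_zero_err hc ha hap hGL)
        (3 * c * (1 + D)) (fun t => ((integrable_const 1).add (hit t)).const_mul _)
        (fun t => by
          rw [integral_const_mul, integral_add (integrable_const 1) (hit t), hDt t]; simp)
      have e2 : cov μ (fun _ => F fun _ => h 0) (fun _ => G fun _ => h 0) = 0 := by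
        simp [cov]
      rw [e2, abs_zero, zero_add] at e1
      have hk : 1 ≤ ηX r ^ ((p - a) / (p - 1)) := Real.one_le_rpow h1.le hθ.le
      calc _ ≤ _ := e1
        _ = S * (6 * c * (1 + D) * 1) := by ring
        _ ≤ _ := by
          refine mul_le_mul_of_nonneg_left (mul_le_mul ?_ hk zero_le_one (by positivity)) hS0
          have : 0 ≤ 6 * c * c₀ := by positivity
          linarith
  refine goal'.trans (le_of_eq ?_)
  ring

end
end

section
/- Let (X_t)_{t∈ℝ} be a strictly stationary ℝ^n-valued process with E[‖X_0‖^p]^{1/p} ≤ C for some constant C > 0 and some p > 1. Let h : ℝ^n → ℝ^m be a map with h(0) = 0 whose components h_1,…,h_m are polynomial functions of total degree at most a, where a is an integer with 1 ≤ a < p, and define Y_t = h(X_t). If (X_t)_{t∈ℝ} is η-weakly dependent with coefficients (η_X(r))_{r≥0}, then (Y_t)_{t∈ℝ} is η-weakly dependent with coefficients η_Y(r) = 𝒞 · η_X(r)^{(p−a)/(p−1)} for some constant 𝒞 ≥ 0 independent of r. -/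
open MeasureTheory ProbabilityTheory Filter

noncomputable section

lemma multiset_prod_lip {n : ℕ} (x y : EuclideanSpace ℝ (Fin n)) (R : ℝ) (hR : 1 ≤ R)
    (hx : ‖x‖ ≤ R) (hy : ‖y‖ ≤ R) (S : Multiset (Fin n)) :
    |(S.map fun i => y i).prod| ≤ R ^ S.card ∧
    |(S.map fun i => x i).prod - (S.map fun i => y i).prod| * R
      ≤ S.card * R ^ S.card * ‖x - y‖ := by
  induction S using Multiset.induction_on with
  | empty => simp
  | cons i S ih =>
    obtain ⟨h1, h2⟩ := ih
    have hxi : |x i| ≤ R := by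
      have := PiLp.norm_apply_le x i
      rw [Real.norm_eq_abs] at this; linarith
    have hyi : |y i| ≤ R := by
      have := PiLp.norm_apply_le y i
      rw [Real.norm_eq_abs] at this; linarith
    have hxy : |x i - y i| ≤ ‖x - y‖ := by
      have := PiLp.norm_apply_le (x - y) i
      simpa [Real.norm_eq_abs] using this
    have hR0 : 0 ≤ R := by linarith
    simp only [Multiset.map_cons, Multiset.prod_cons, Multiset.card_cons]
    set A := (S.map fun i => x i).prod
    set B := (S.map fun i => y i).prod
    constructor
    · rw [abs_mul, pow_succ, mul_comm]
      exact mul_le_mul h1 hyi (abs_nonneg _) (by positivity)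
    · have e : x i * A - y i * B = x i * (A - B) + (x i - y i) * B := by ring
      have t : |x i * A - y i * B| ≤ |x i| * |A - B| + |x i - y i| * |B| := by
        rw [e, ← abs_mul, ← abs_mul]; exact abs_add_le _ _
      have t1 : |x i| * (|A - B| * R) ≤ R * (S.card * R ^ S.card * ‖x - y‖) :=
        mul_le_mul hxi h2 (by positivity) hR0
      have t2 : |x i - y i| * |B| ≤ ‖x - y‖ * R ^ S.card :=
        mul_le_mul hxy h1 (by positivity) (by positivity)
      have t3 := mul_le_mul_of_nonneg_right t hR0
      have t4 := mul_le_mul_of_nonneg_right t2 hR0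
      push_cast
      calc _ ≤ _ := t3
        _ = |x i| * (|A - B| * R) + |x i - y i| * |B| * R := by ring
        _ ≤ R * (S.card * R ^ S.card * ‖x - y‖) + ‖x - y‖ * R ^ S.card * R := add_le_add t1 t4
        _ = _ := by ring

lemma mvpoly_lip {n : ℕ} (Q : MvPolynomial (Fin n) ℝ) (a : ℕ) (hQ : Q.totalDegree ≤ a) :
    ∃ K : ℝ, 0 ≤ K ∧ ∀ R : ℝ, 1 ≤ R → ∀ x y : EuclideanSpace ℝ (Fin n), ‖x‖ ≤ R → ‖y‖ ≤ R →
      |MvPolynomial.eval (fun i => x i) Q - MvPolynomial.eval (fun i => y i) Q| * R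
        ≤ K * R ^ a * ‖x - y‖ := by
  refine ⟨∑ d ∈ Q.support, |Q.coeff d| * a, by positivity, fun R hR x y hx hy => ?_⟩
  have hR0 : 0 ≤ R := by linarith
  rw [MvPolynomial.eval_eq, MvPolynomial.eval_eq, ← Finset.sum_sub_distrib]
  calc _ ≤ (∑ d ∈ Q.support, |Q.coeff d * ∏ i ∈ d.support, x i ^ d i
            - Q.coeff d * ∏ i ∈ d.support, y i ^ d i|) * R :=
        mul_le_mul_of_nonneg_right (Finset.abs_sum_le_sum_abs _ _) hR0
    _ ≤ _ := by
      rw [Finset.sum_mul, Finset.sum_mul, Finset.sum_mul]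
      refine Finset.sum_le_sum fun d hd => ?_
      have key := (multiset_prod_lip x y R hR hx hy (Finsupp.toMultiset d)).2
      have conv : ∀ z : EuclideanSpace ℝ (Fin n),
          ((Finsupp.toMultiset d).map fun i => z i).prod = ∏ i ∈ d.support, z i ^ d i := by
        intro z
        rw [Finsupp.toMultiset_map, Finsupp.prod_toMultiset, Finsupp.prod_mapDomain_index]
        · rfl
        · simp
        · intros; rw [pow_add]
      rw [conv, conv] at key
      have hc : (Finsupp.toMultiset d).card ≤ a := by
        rw [Finsupp.card_toMultiset]
        exact (MvPolynomial.le_totalDegree hd).trans hQ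
      have hc' : ((Finsupp.toMultiset d).card : ℝ) ≤ a := by exact_mod_cast hc
      have hp : R ^ (Finsupp.toMultiset d).card ≤ R ^ a := pow_le_pow_right₀ hR hc
      rw [← mul_sub, abs_mul, mul_assoc]
      calc _ ≤ |Q.coeff d| * (a * R ^ a * ‖x - y‖) := by
            refine mul_le_mul_of_nonneg_left (key.trans ?_) (abs_nonneg _)
            gcongr
        _ = _ := by ring

lemma euclid_norm_le_sum {m : ℕ} (z : EuclideanSpace ℝ (Fin m)) : ‖z‖ ≤ ∑ s, |z s| := by
  rw [EuclideanSpace.norm_eq]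
  refine Real.sqrt_le_iff.2 ⟨by positivity, ?_⟩
  simp only [Real.norm_eq_abs]
  exact Finset.sum_sq_le_sq_sum_of_nonneg fun _ _ => abs_nonneg _

lemma polymap_lip {n m : ℕ} (h : EuclideanSpace ℝ (Fin n) → EuclideanSpace ℝ (Fin m))
    (a : ℕ) (P : Fin m → MvPolynomial (Fin n) ℝ)
    (hdeg : ∀ s, (P s).totalDegree ≤ a)
    (hP : ∀ (x : EuclideanSpace ℝ (Fin n)) (s : Fin m),
      h x s = MvPolynomial.eval (fun i => x i) (P s)) :
    ∃ K : ℝ, 0 ≤ K ∧ ∀ R : ℝ, 1 ≤ R → ∀ x y : EuclideanSpace ℝ (Fin n), ‖x‖ ≤ R → ‖y‖ ≤ R →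
      ‖h x - h y‖ ≤ K * R ^ ((a : ℝ) - 1) * ‖x - y‖ := by
  choose K hK0 hK using fun s => mvpoly_lip (P s) a (hdeg s)
  refine ⟨∑ s, K s, Finset.sum_nonneg fun s _ => hK0 s, fun R hR x y hx hy => ?_⟩
  have hR0 : 0 < R := by linarith
  rw [Real.rpow_sub hR0, Real.rpow_one, Real.rpow_natCast]
  have : ‖h x - h y‖ * R ≤ (∑ s, K s) * R ^ a * ‖x - y‖ := by
    calc _ ≤ (∑ s, |(h x - h y) s|) * R :=
          mul_le_mul_of_nonneg_right (euclid_norm_le_sum _) hR0.le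
      _ ≤ _ := by
        rw [Finset.sum_mul, Finset.sum_mul, Finset.sum_mul]
        refine Finset.sum_le_sum fun s _ => ?_
        have := hK s R hR x y hx hy
        rw [← hP, ← hP] at this
        exact this
  calc _ ≤ ((∑ s, K s) * R ^ a * ‖x - y‖) / R := (le_div_iff₀ hR0).2 this
    _ = _ := by ring

/-- coordinatewise truncation -/
def clampE {n : ℕ} (M : ℝ) (x : EuclideanSpace ℝ (Fin n)) : EuclideanSpace ℝ (Fin n) :=
  WithLp.toLp 2 fun i => max (-M) (min M (x i))

lemma euclid_norm_mono {n : ℕ} (x y : EuclideanSpace ℝ (Fin n)) (hxy : ∀ i, |x i| ≤ |y i|) :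
    ‖x‖ ≤ ‖y‖ := by
  rw [EuclideanSpace.norm_eq, EuclideanSpace.norm_eq]
  refine Real.sqrt_le_sqrt (Finset.sum_le_sum fun i _ => ?_)
  exact pow_le_pow_left₀ (norm_nonneg _) (hxy i) 2

lemma clampE_lip {n : ℕ} (M : ℝ) (x y : EuclideanSpace ℝ (Fin n)) :
    ‖clampE M x - clampE M y‖ ≤ ‖x - y‖ := by
  refine euclid_norm_mono _ _ fun i => ?_
  change |max (-M) (min M (x i)) - max (-M) (min M (y i))| ≤ |x i - y i|
  refine (abs_max_sub_max_le_max _ _ _ _).trans ?_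
  simp only [sub_self, abs_zero]
  refine max_le (abs_nonneg _) ((abs_min_sub_min_le_max _ _ _ _).trans ?_)
  simp

lemma clampE_norm_le {n : ℕ} (M : ℝ) (hM : 0 ≤ M) (x : EuclideanSpace ℝ (Fin n)) :
    ‖clampE M x‖ ≤ ‖x‖ := by
  have h0 : clampE M (0 : EuclideanSpace ℝ (Fin n)) = 0 := by
    ext i; simp [clampE, hM]
  simpa [h0] using clampE_lip M x 0

lemma clampE_norm_le' {n : ℕ} (M : ℝ) (hM : 0 ≤ M) (x : EuclideanSpace ℝ (Fin n)) :
    ‖clampE M x‖ ≤ (n + 1) * M := by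
  refine (euclid_norm_le_sum _).trans ?_
  calc _ ≤ ∑ _i : Fin n, M := by
        refine Finset.sum_le_sum fun i _ => ?_
        change |max (-M) (min M (x i))| ≤ M
        rw [abs_le]
        exact ⟨le_max_left _ _, max_le (by linarith) (min_le_left _ _)⟩
    _ = n * M := by simp
    _ ≤ _ := by nlinarith

lemma clampE_eq {n : ℕ} (M : ℝ) (x : EuclideanSpace ℝ (Fin n)) (hx : ‖x‖ ≤ M) :
    clampE M x = x := by
  ext i
  change max (-M) (min M (x i)) = x i
  have := PiLp.norm_apply_le x i
  rw [Real.norm_eq_abs] at this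
  have h2 := abs_le.1 (this.trans hx)
  rw [min_eq_right h2.2, max_eq_right h2.1]

lemma clampE_cont {n : ℕ} (M : ℝ) :
    Continuous (clampE M : EuclideanSpace ℝ (Fin n) → EuclideanSpace ℝ (Fin n)) := by
  refine (LipschitzWith.of_dist_le_mul (K := 1) fun x y => ?_).continuous
  simpa [dist_eq_norm] using clampE_lip M x y

lemma cov_compare {Ω : Type*} [MeasurableSpace Ω] (μ : Measure Ω) [IsProbabilityMeasure μ]
    (U V U' V' D D' : Ω → ℝ) (hU : Measurable U) (hV : Measurable V) (hU' : Measurable U')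
    (hV' : Measurable V') (bU : ∀ ω, |U ω| ≤ 1) (bV : ∀ ω, |V ω| ≤ 1) (bU' : ∀ ω, |U' ω| ≤ 1)
    (bV' : ∀ ω, |V' ω| ≤ 1) (hD : Integrable D μ) (hD' : Integrable D' μ)
    (h1 : ∀ ω, |U ω - U' ω| ≤ D ω) (h2 : ∀ ω, |V ω - V' ω| ≤ D' ω) :
    |cov μ U V| ≤ |cov μ U' V'| + 2 * (∫ ω, D ω ∂μ + ∫ ω, D' ω ∂μ) := by
  have bint : ∀ W : Ω → ℝ, Measurable W → (∀ ω, |W ω| ≤ 1) → Integrable W μ := fun W hW bW =>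
    Integrable.of_bound hW.aestronglyMeasurable 1 (Eventually.of_forall bW)
  have bmul : ∀ W Z : Ω → ℝ, (∀ ω, |W ω| ≤ 1) → (∀ ω, |Z ω| ≤ 1) → ∀ ω, |W ω * Z ω| ≤ 1 := by
    intro W Z hW hZ ω
    rw [abs_mul]; exact mul_le_one₀ (hW ω) (abs_nonneg _) (hZ ω)
  have iU := bint U hU bU
  have iV := bint V hV bV
  have iU' := bint U' hU' bU'
  have iV' := bint V' hV' bV'
  have iUV := bint (fun ω => U ω * V ω) (hU.mul hV) (bmul U V bU bV)
  have iUV' := bint (fun ω => U' ω * V' ω) (hU'.mul hV') (bmul U' V' bU' bV')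
  have eabs : ∀ W Z : Ω → ℝ, Integrable Z μ → (∀ ω, |W ω| ≤ Z ω) → |∫ ω, W ω ∂μ| ≤ ∫ ω, Z ω ∂μ :=
    fun W Z hZ hWZ => norm_integral_le_of_norm_le (f := W) hZ (Eventually.of_forall hWZ)
  have e1 : |∫ ω, U ω * V ω ∂μ - ∫ ω, U' ω * V' ω ∂μ| ≤ ∫ ω, D ω ∂μ + ∫ ω, D' ω ∂μ := by
    rw [← integral_sub iUV iUV', ← integral_add hD hD']
    refine eabs _ _ (hD.add hD') fun ω => ?_
    have e : U ω * V ω - U' ω * V' ω = (U ω - U' ω) * V ω + U' ω * (V ω - V' ω) := by ring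
    rw [e]
    refine (abs_add_le _ _).trans ?_
    rw [abs_mul, abs_mul]
    have := mul_le_mul (h1 ω) (bV ω) (abs_nonneg _) ((abs_nonneg _).trans (h1 ω))
    have := mul_le_mul (bU' ω) (h2 ω) (abs_nonneg _) zero_le_one
    linarith
  have b1 : ∀ W : Ω → ℝ, (∀ ω, |W ω| ≤ 1) → |∫ ω, W ω ∂μ| ≤ 1 := by
    intro W hW
    simpa using eabs W (fun _ => 1) (integrable_const _) hW
  have d1 : |∫ ω, U ω ∂μ - ∫ ω, U' ω ∂μ| ≤ ∫ ω, D ω ∂μ := by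
    rw [← integral_sub iU iU']; exact eabs _ _ hD h1
  have d2 : |∫ ω, V ω ∂μ - ∫ ω, V' ω ∂μ| ≤ ∫ ω, D' ω ∂μ := by
    rw [← integral_sub iV iV']; exact eabs _ _ hD' h2
  have c1 := b1 V bV
  have c2 := b1 U' bU'
  unfold cov
  generalize ∫ ω, U ω * V ω ∂μ = x at *
  generalize ∫ ω, U' ω * V' ω ∂μ = x' at *
  generalize ∫ ω, U ω ∂μ = u at *
  generalize ∫ ω, U' ω ∂μ = u' at *
  generalize ∫ ω, V ω ∂μ = v at *
  generalize ∫ ω, V' ω ∂μ = v' at *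
  generalize ∫ ω, D ω ∂μ = d at *
  generalize ∫ ω, D' ω ∂μ = d' at *
  have e : x - u * v = (x' - u' * v') + ((x - x') + (-((u - u') * v) + -(u' * (v - v')))) := by ring
  rw [e]
  refine (abs_add_le _ _).trans (add_le_add le_rfl ((abs_add_le _ _).trans ?_))
  have := abs_add_le (-((u - u') * v)) (-(u' * (v - v')))
  rw [abs_neg, abs_neg, abs_mul, abs_mul] at this
  have := mul_le_mul d1 c1 (abs_nonneg _) ((abs_nonneg _).trans d1)
  have := mul_le_mul c2 d2 (abs_nonneg _) zero_le_one
  linarith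

/-- comparison along a finite family of times -/
lemma cov_compare_proc {Ω : Type*} [MeasurableSpace Ω] (μ : Measure Ω) [IsProbabilityMeasure μ]
    {E E' : Type*} [NormedAddCommGroup E] [MeasurableSpace E]
    [NormedAddCommGroup E'] [MeasurableSpace E']
    (X : ℝ → Ω → E) (hX : ∀ t, Measurable (X t)) (f g : E → E') (hf : Measurable f)
    (hg : Measurable g) (D : E → ℝ) (hfg : ∀ x, ‖f x - g x‖ ≤ D x)
    (hD : ∀ t, Integrable (fun ω => D (X t ω)) μ) (d : ℝ) (hd : ∀ t, ∫ ω, D (X t ω) ∂μ = d)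
    {u v : ℕ} (i : Fin u → ℝ) (j : Fin v → ℝ)
    (F : (Fin u → E') → ℝ) (G : (Fin v → E') → ℝ) (LF LG : ℝ)
    (mF : Measurable F) (mG : Measurable G) (bF : ∀ x, |F x| ≤ 1) (bG : ∀ x, |G x| ≤ 1)
    (lF : Delta1Lip F LF) (lG : Delta1Lip G LG) :
    |cov μ (fun ω => F fun a => f (X (i a) ω)) (fun ω => G fun b => f (X (j b) ω))| ≤
    |cov μ (fun ω => F fun a => g (X (i a) ω)) (fun ω => G fun b => g (X (j b) ω))| +
      2 * (u * LF + v * LG) * d := by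
  have mm : ∀ (w : ℕ) (H : (Fin w → E') → ℝ) (k : Fin w → ℝ) (q : E → E'), Measurable H →
      Measurable q → Measurable (fun ω => H fun a => q (X (k a) ω)) := by
    intro w H k q hH hq
    exact hH.comp (measurable_pi_lambda _ fun a => hq.comp (hX _))
  have ii : ∀ (w : ℕ) (k : Fin w → ℝ) (L : ℝ),
      Integrable (fun ω => L * ∑ a, D (X (k a) ω)) μ := fun w k L =>
    (integrable_finsetSum _ fun a _ => hD (k a)).const_mul L
  have dd : ∀ (w : ℕ) (k : Fin w → ℝ) (L : ℝ),
      ∫ ω, L * ∑ a, D (X (k a) ω) ∂μ = w * L * d := by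
    intro w k L
    rw [integral_const_mul, integral_finsetSum _ fun a _ => hD (k a)]
    simp only [hd]
    simp; ring
  have ll : ∀ (w : ℕ) (H : (Fin w → E') → ℝ) (k : Fin w → ℝ) (L : ℝ), Delta1Lip H L → ∀ ω,
      |(H fun a => f (X (k a) ω)) - (H fun a => g (X (k a) ω))| ≤ L * ∑ a, D (X (k a) ω) := by
    intro w H k L hL ω
    exact (hL.2 _ _).trans (mul_le_mul_of_nonneg_left
      (Finset.sum_le_sum fun a _ => hfg _) hL.1)
  have := cov_compare μ _ _ _ _ _ _ (mm u F i f mF hf) (mm v G j f mG hf) (mm u F i g mF hg)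
    (mm v G j g mG hg) (fun _ => bF _) (fun _ => bG _) (fun _ => bF _) (fun _ => bG _)
    (ii u i LF) (ii v j LG) (ll u F i LF lF) (ll v G j LG lG)
  rw [dd, dd] at this
  linarith

/-- Hereditary property of η-weak dependence under a polynomial transformation
(Corollary 2.9 of Curato–Stelzer). -/
theorem eta_hereditary_polynomial
    {Ω : Type*} [MeasurableSpace Ω] (μ : Measure Ω) [IsProbabilityMeasure μ]
    {n m : ℕ} (X : ℝ → Ω → EuclideanSpace ℝ (Fin n))
    (hXmeas : ∀ t, Measurable (X t))
    (hstat : StrictlyStationary μ X)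
    (p C : ℝ) (hp : 1 < p) (hC : 0 < C)
    (hint : Integrable (fun ω => ‖X 0 ω‖ ^ p) μ)
    (hmom : (∫ ω, ‖X 0 ω‖ ^ p ∂μ) ^ (1 / p) ≤ C)
    (h : EuclideanSpace ℝ (Fin n) → EuclideanSpace ℝ (Fin m))
    (a : ℕ) (ha : 1 ≤ a) (hap : (a : ℝ) < p)
    (h0 : h 0 = 0)
    (P : Fin m → MvPolynomial (Fin n) ℝ)
    (hdeg : ∀ s, (P s).totalDegree ≤ a)
    (hP : ∀ (x : EuclideanSpace ℝ (Fin n)) (s : Fin m),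
      h x s = MvPolynomial.eval (fun i => x i) (P s))
    (ηX : ℝ → ℝ) (c₀ : ℝ)
    (hX : EtaWeaklyDependent μ X ηX c₀) :
    ∃ C' c₁ : ℝ, 0 ≤ C' ∧
      EtaWeaklyDependent μ (fun t ω => h (X t ω))
        (fun r => C' * ηX r ^ ((p - (a : ℝ)) / (p - 1))) c₁ := by
  obtain ⟨K, hK0, hK⟩ := polymap_lip h a P hdeg hP
  obtain ⟨hc0, hη0, hηt, hXd⟩ := hX
  have ha' : (1 : ℝ) ≤ a := by exact_mod_cast ha
  have hp1 : 0 < p - 1 := by linarith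
  have hpa : 0 < p - a := by linarith
  set θ := (p - (a : ℝ)) / (p - 1) with hθ
  have hθ0 : 0 < θ := by positivity
  -- moments
  have hid : ∀ t, IdentDistrib (X t) (X 0) μ μ := by
    intro t
    have := (hstat t 1 (fun _ => 0)).comp (u := fun z : Fin 1 → EuclideanSpace ℝ (Fin n) => z 0)
      (measurable_pi_apply 0)
    simpa [Function.comp_def] using this
  have hidp : ∀ t, IdentDistrib (fun ω => ‖X t ω‖ ^ p) (fun ω => ‖X 0 ω‖ ^ p) μ μ := by
    intro t
    exact (hid t).comp (u := fun z => ‖z‖ ^ p) (by fun_prop)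
  have hi : ∀ t, Integrable (fun ω => ‖X t ω‖ ^ p) μ := fun t => (hidp t).integrable_iff.2 hint
  set B := ∫ ω, ‖X 0 ω‖ ^ p ∂μ with hB
  have hB0 : 0 ≤ B := integral_nonneg fun ω => by positivity
  have hBt : ∀ t, ∫ ω, ‖X t ω‖ ^ p ∂μ = B := fun t => (hidp t).integral_eq
  -- continuity
  have hcont : Continuous h := by
    refine (PiLp.continuous_toLp 2 _).comp (g := fun z : Fin m → ℝ => WithLp.toLp 2 z)
      (f := fun x s => h x s) ?_ |>.congr fun x => rfl
    refine continuous_pi fun s => ?_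
    simp only [hP]
    exact (MvPolynomial.continuous_eval (P s)).comp (by fun_prop)
  have hmeas : Measurable h := hcont.measurable
  set N : ℝ := (n : ℝ) + 1 with hN
  have hN1 : 1 ≤ N := by simp [hN]
  set A1 := c₀ * K * N ^ ((a : ℝ) - 1)
  set A2 := 4 * K * B
  set A3 := 2 * K * (1 + B)
  have hA1 : 0 ≤ A1 := by positivity
  have hA2 : 0 ≤ A2 := by positivity
  have hA3 : 0 ≤ A3 := by positivity
  refine ⟨1, A1 + A2 + A3, zero_le_one, by positivity, fun r => ?_, ?_, ?_⟩
  · have := hη0 r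
    positivity
  · have := hηt.rpow_const (p := θ) (Or.inr hθ0.le)
    rw [Real.zero_rpow hθ0.ne'] at this
    simpa using this
  intro u v hu hv r hr i j mi mj hij F G LF LG mF mG bF bG lF lG
  have hLF := lF.1
  have hLG := lG.1
  set S := (u : ℝ) * LF + v * LG with hS
  have hS0 : 0 ≤ S := by positivity
  have hη := hη0 r
  beta_reduce
  rw [one_mul]
  -- crude bound
  have crude : |cov μ (fun ω => F fun a => h (X (i a) ω)) (fun ω => G fun b => h (X (j b) ω))|
      ≤ A3 * S := by
    have := cov_compare_proc μ X hXmeas h (fun _ => 0) hmeas measurable_const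
      (fun x => K * (1 + ‖x‖ ^ p)) (by
        intro x
        rw [sub_zero]
        rcases le_total ‖x‖ 1 with hx | hx
        · have := hK 1 le_rfl x 0 hx (by simp)
          rw [h0, sub_zero, sub_zero, Real.one_rpow, mul_one] at this
          refine this.trans (mul_le_mul_of_nonneg_left ?_ hK0)
          have : 0 ≤ ‖x‖ ^ p := by positivity
          linarith
        · have := hK ‖x‖ hx x 0 le_rfl (by simp)
          rw [h0, sub_zero, sub_zero, mul_assoc, ← Real.rpow_add_one (by positivity),
            sub_add_cancel] at this
          refine this.trans (mul_le_mul_of_nonneg_left ?_ hK0)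
          have := Real.rpow_le_rpow_of_exponent_le hx hap.le
          linarith)
      (fun t => ((integrable_const _).add (hi t)).const_mul K) (K * (1 + B)) (by
        intro t
        rw [integral_const_mul, integral_add (integrable_const _) (hi t), hBt]
        simp) i j F G LF LG mF mG bF bG lF lG
    refine this.trans (le_of_eq ?_)
    have : cov μ (fun _ => F fun _ => 0) (fun _ => G fun _ => 0) = 0 := by simp [cov]
    rw [this]
    simp only [abs_zero, A3, hS]
    ring
  have fine : ∀ M : ℝ, 1 ≤ M →
      |cov μ (fun ω => F fun a => h (X (i a) ω)) (fun ω => G fun b => h (X (j b) ω))|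
      ≤ A1 * S * (M ^ ((a : ℝ) - 1) * ηX r) + A2 * S * M ^ ((a : ℝ) - p) := by
    intro M hM
    have hM0 : 0 < M := by linarith
    have hmc : Measurable (fun x => h (clampE M x)) := hmeas.comp (clampE_cont M).measurable
    have h1 := cov_compare_proc μ X hXmeas h (fun x => h (clampE M x)) hmeas hmc
      (fun x => 2 * K * M ^ ((a : ℝ) - p) * ‖x‖ ^ p) (by
        intro x
        rcases le_or_gt ‖x‖ M with hx | hx
        · rw [clampE_eq M x hx, sub_self, norm_zero]
          positivity
        · have hx1 : 1 ≤ ‖x‖ := by linarith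
          have hx0 : 0 < ‖x‖ := by linarith
          have hcl := clampE_norm_le M hM0.le x
          have h2 := hK ‖x‖ hx1 x (clampE M x) le_rfl hcl
          have h3 : ‖x - clampE M x‖ ≤ 2 * ‖x‖ := (norm_sub_le _ _).trans (by linarith)
          have h4 : ‖x‖ ^ ((a : ℝ) - p) ≤ M ^ ((a : ℝ) - p) :=
            Real.rpow_le_rpow_of_nonpos hM0 hx.le (by linarith)
          calc _ ≤ _ := h2
            _ ≤ K * ‖x‖ ^ ((a : ℝ) - 1) * (2 * ‖x‖) := by gcongr
            _ = 2 * K * (‖x‖ ^ ((a : ℝ) - 1) * ‖x‖) := by ring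
            _ = 2 * K * (‖x‖ ^ ((a : ℝ) - p) * ‖x‖ ^ p) := by
              rw [← Real.rpow_add_one hx0.ne', ← Real.rpow_add hx0]
              rw [sub_add_cancel, sub_add_cancel]
            _ ≤ 2 * K * (M ^ ((a : ℝ) - p) * ‖x‖ ^ p) := by gcongr
            _ = _ := by ring)
      (fun t => (hi t).const_mul _) (2 * K * M ^ ((a : ℝ) - p) * B) (by
        intro t
        rw [integral_const_mul, hBt]) i j F G LF LG mF mG bF bG lF lG
    have hNM : 1 ≤ N * M := one_le_mul_of_one_le_of_one_le hN1 hM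
    have lip : ∀ (w : ℕ) (H : (Fin w → EuclideanSpace ℝ (Fin m)) → ℝ) (L : ℝ), Delta1Lip H L →
        Delta1Lip (fun z : Fin w → EuclideanSpace ℝ (Fin n) => H fun b => h (clampE M (z b)))
          (L * (K * (N * M) ^ ((a : ℝ) - 1))) := by
      intro w H L hL
      have hL0 := hL.1
      refine ⟨by positivity, fun x y => (hL.2 _ _).trans ?_⟩
      rw [mul_assoc L, Finset.mul_sum _ _ (K * (N * M) ^ ((a : ℝ) - 1))]
      refine mul_le_mul_of_nonneg_left (Finset.sum_le_sum fun b _ => ?_) hL0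
      refine (hK (N * M) hNM _ _ (clampE_norm_le' M hM0.le _) (clampE_norm_le' M hM0.le _)).trans ?_
      exact mul_le_mul_of_nonneg_left (clampE_lip M _ _) (by positivity)
    have mes : ∀ (w : ℕ) (H : (Fin w → EuclideanSpace ℝ (Fin m)) → ℝ), Measurable H →
        Measurable (fun z : Fin w → EuclideanSpace ℝ (Fin n) => H fun b => h (clampE M (z b))) := by
      intro w H hH
      exact hH.comp (measurable_pi_lambda _ fun b => hmc.comp (measurable_pi_apply b))
    have h2 := hXd u v hu hv r hr i j mi mj hij _ _ _ _ (mes u F mF) (mes v G mG)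
      (fun _ => bF _) (fun _ => bG _) (lip u F LF lF) (lip v G LG lG)
    refine h1.trans ((add_le_add h2 le_rfl).trans (le_of_eq ?_))
    rw [Real.mul_rpow (by linarith) hM0.le]
    simp only [A1, A2, hS]
    ring
  rcases lt_or_ge 1 (ηX r) with h1 | h1
  · have : 1 ≤ ηX r ^ θ := Real.one_le_rpow h1.le hθ0.le
    calc _ ≤ A3 * S := crude
      _ ≤ (A1 + A2 + A3) * S := by gcongr; linarith
      _ ≤ _ := le_mul_of_one_le_right (by positivity) this
  rcases hη.eq_or_lt with h2 | h2
  · rw [← h2, Real.zero_rpow hθ0.ne', mul_zero]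
    have lim : Tendsto (fun M : ℝ => A2 * S * M ^ ((a : ℝ) - p)) atTop (nhds (A2 * S * 0)) := by
      have := tendsto_rpow_neg_atTop hpa
      rw [neg_sub] at this
      exact this.const_mul _
    rw [mul_zero] at lim
    refine ge_of_tendsto lim ?_
    filter_upwards [eventually_ge_atTop 1] with M hM
    have := fine M hM
    rw [← h2] at this
    simpa using this
  · have := fine (ηX r ^ (-(1 / (p - 1)))) (Real.one_le_rpow_of_pos_of_le_one_of_nonpos h2 h1
      (by have : 0 < 1 / (p - 1) := by positivity
          linarith))
    rw [← Real.rpow_mul h2.le, ← Real.rpow_mul h2.le, ← Real.rpow_add_one h2.ne'] at this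
    have e1 : -(1 / (p - 1)) * ((a : ℝ) - 1) + 1 = θ := by
      rw [hθ]; field_simp; ring
    have e2 : -(1 / (p - 1)) * ((a : ℝ) - p) = θ := by
      rw [hθ]; field_simp; ring
    rw [e1, e2] at this
    have h3 : 0 ≤ A3 * S * ηX r ^ θ := by positivity
    refine this.trans ?_
    linarith


end
end

section
/- Let (X_t)_{t∈ℝ} be an ℝ^n-valued process and ψ : [0,∞) → [0,∞) a function. Suppose that for every m ≥ 0 there is an ℝ^n-valued family (X_t^{(m)})_{t∈ℝ} on the same probability space such that (i) E‖X_t − X_t^{(m)}‖ ≤ ψ(m) for all t ∈ ℝ, and (ii) for all u,v ∈ ℕ* and all real indices i_1 ≤ … ≤ i_u and j_1 ≤ … ≤ j_v with j_1 − i_u ≥ 2m, the random vectors (X^{(m)}_{i_1},…,X^{(m)}_{i_u}) and (X^{(m)}_{j_1},…,X^{(m)}_{j_v}) are independent. Then for all u,v ∈ ℕ*, all r ≥ 0, all real indices i_1 ≤ … ≤ i_u ≤ i_u + r ≤ j_1 ≤ … ≤ j_v, and all Lipschitz functions F : (ℝ^n)^u → ℝ and G : (ℝ^n)^v → ℝ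 with ‖F‖_∞ ≤ 1 and ‖G‖_∞ ≤ 1, one has |Cov(F(X_{i_1},…,X_{i_u}), G(X_{j_1},…,X_{j_v}))| ≤ 2 ( u Lip(F) + v Lip(G) ) ψ(r/2). Consequently, if ψ(m) → 0 as m → ∞, the process X is η-weakly dependent with coefficients η(r) = ψ(r/2) and constant 2. -/
open MeasureTheory ProbabilityTheory Filter

noncomputable section

/-- The covariance of variables bounded by `1`, compared with an uncorrelated pair. -/
theorem cov_bound_aux {Ω : Type*} [MeasurableSpace Ω] (μ : Measure Ω) [IsProbabilityMeasure μ]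
    (U V U' V' : Ω → ℝ) (hU : Measurable U) (hV : Measurable V)
    (hU' : Measurable U') (hV' : Measurable V')
    (bU : ∀ ω, |U ω| ≤ 1) (bV : ∀ ω, |V ω| ≤ 1) (bU' : ∀ ω, |U' ω| ≤ 1) (bV' : ∀ ω, |V' ω| ≤ 1)
    (hind : IndepFun U' V' μ) (A B : ℝ)
    (hA : ∫ ω, |U ω - U' ω| ∂μ ≤ A) (hB : ∫ ω, |V ω - V' ω| ∂μ ≤ B) :
    |cov μ U V| ≤ 2 * (A + B) := by
  have key : ∀ f : Ω → ℝ, Measurable f → ∀ C : ℝ, (∀ ω, |f ω| ≤ C) → Integrable f μ :=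
    fun f hf C hC => Integrable.of_bound hf.aestronglyMeasurable C
      (Filter.Eventually.of_forall hC)
  have iU := key U hU 1 bU
  have iV := key V hV 1 bV
  have iU' := key U' hU' 1 bU'
  have iV' := key V' hV' 1 bV'
  have bm : ∀ a b : ℝ, |a| ≤ 1 → |b| ≤ 1 → |a * b| ≤ 1 := fun a b ha hb => by
    rw [abs_mul]; exact mul_le_one₀ ha (abs_nonneg _) hb
  have iUV := key (fun ω => U ω * V ω) (hU.mul hV) 1 (fun ω => bm _ _ (bU ω) (bV ω))
  have iUV' := key (fun ω => U' ω * V' ω) (hU'.mul hV') 1 (fun ω => bm _ _ (bU' ω) (bV' ω))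
  have hmul : ∫ ω, U' ω * V' ω ∂μ = (∫ ω, U' ω ∂μ) * ∫ ω, V' ω ∂μ :=
    hind.integral_fun_mul_eq_mul_integral iU'.aestronglyMeasurable iV'.aestronglyMeasurable
  have one : ∀ f : Ω → ℝ, (∀ ω, |f ω| ≤ 1) → |∫ ω, f ω ∂μ| ≤ 1 := fun f hf => by
    have := norm_integral_le_of_norm_le_const (μ := μ) (f := f) (C := 1)
      (Filter.Eventually.of_forall hf)
    simpa using this
  have dm : ∀ a b a' b' : ℝ, |b| ≤ 1 → |a'| ≤ 1 → |a * b - a' * b'| ≤ |a - a'| + |b - b'| := by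
    intro a b a' b' hb ha'
    have e : a * b - a' * b' = (a - a') * b + a' * (b - b') := by ring
    rw [e]
    refine (abs_add_le _ _).trans ?_
    rw [abs_mul, abs_mul]
    nlinarith [abs_nonneg (a - a'), abs_nonneg (b - b')]
  have h1 : |(∫ ω, U ω * V ω ∂μ) - ∫ ω, U' ω * V' ω ∂μ| ≤ A + B := by
    rw [← integral_sub iUV iUV']
    refine abs_integral_le_integral_abs.trans ?_
    refine le_trans (integral_mono (iUV.sub iUV').abs ((iU.sub iU').abs.add (iV.sub iV').abs)
      (fun ω => dm _ _ _ _ (bV ω) (bU' ω))) ?_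
    have := integral_add (iU.sub iU').abs (iV.sub iV').abs
    simp only [Pi.add_apply, Pi.sub_apply] at this ⊢
    linarith
  have hU1 : |(∫ ω, U ω ∂μ) - ∫ ω, U' ω ∂μ| ≤ A := by
    rw [← integral_sub iU iU']
    exact abs_integral_le_integral_abs.trans hA
  have hV1 : |(∫ ω, V ω ∂μ) - ∫ ω, V' ω ∂μ| ≤ B := by
    rw [← integral_sub iV iV']
    exact abs_integral_le_integral_abs.trans hB
  have h2 := dm (∫ ω, U ω ∂μ) (∫ ω, V ω ∂μ) (∫ ω, U' ω ∂μ) (∫ ω, V' ω ∂μ) (one V bV) (one U' bU')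
  unfold cov
  rw [hmul] at h1
  rw [abs_le] at h1 h2 ⊢
  constructor <;> linarith [h1.1, h1.2, h2.1, h2.2]

/-- `L¹` bound for a Lipschitz functional. -/
theorem lip_bound_aux {Ω : Type*} [MeasurableSpace Ω] (μ : Measure Ω) [IsProbabilityMeasure μ]
    {E : Type*} [NormedAddCommGroup E] {u : ℕ}
    (Y Z : Fin u → Ω → E) (c : ℝ)
    (h : ∀ a, Integrable (fun ω => ‖Y a ω - Z a ω‖) μ ∧ (∫ ω, ‖Y a ω - Z a ω‖ ∂μ) ≤ c)
    (F : (Fin u → E) → ℝ) (L : ℝ) (hF : Delta1Lip F L) :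
    ∫ ω, |F (fun a => Y a ω) - F (fun a => Z a ω)| ∂μ ≤ u * L * c := by
  have hi : Integrable (fun ω => L * ∑ a, ‖Y a ω - Z a ω‖) μ :=
    (integrable_finsetSum _ fun a _ => (h a).1).const_mul L
  refine (integral_mono_of_nonneg (Filter.Eventually.of_forall fun ω => abs_nonneg _) hi
    (Filter.Eventually.of_forall fun ω => hF.2 _ _)).trans ?_
  rw [integral_const_mul, integral_finsetSum _ fun a _ => (h a).1]
  have : ∑ a, ∫ ω, ‖Y a ω - Z a ω‖ ∂μ ≤ u * c := by
    refine (Finset.sum_le_sum fun a _ => (h a).2).trans ?_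
    simp
  nlinarith [mul_le_mul_of_nonneg_left this hF.1]

/-- Coupling criterion for η-weak dependence: if for every `m ≥ 0` there is a family
`X^(m)` that is `ψ(m)`-close to `X` in `L¹` and whose past and future marginals separated by
a gap `2m` are independent, then the η-weak dependence inequality holds with `η(r) = ψ(r/2)`
and constant `2`. -/
theorem eta_weak_dependence_of_coupling
    {Ω : Type*} [MeasurableSpace Ω] (μ : Measure Ω) [IsProbabilityMeasure μ]
    {n : ℕ} (X : ℝ → Ω → EuclideanSpace ℝ (Fin n))
    (hX : ∀ t, Measurable (X t))
    (ψ : ℝ → ℝ) (hψ0 : ∀ m, 0 ≤ ψ m)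
    (Xm : ℝ → ℝ → Ω → EuclideanSpace ℝ (Fin n))
    (hXm : ∀ m t, Measurable (Xm m t))
    (happrox : ∀ m, 0 ≤ m → ∀ t : ℝ,
      Integrable (fun ω => ‖X t ω - Xm m t ω‖) μ ∧
        (∫ ω, ‖X t ω - Xm m t ω‖ ∂μ) ≤ ψ m)
    (hindep : ∀ m, 0 ≤ m → ∀ (u v : ℕ), 0 < u → 0 < v →
      ∀ (i : Fin u → ℝ) (j : Fin v → ℝ), Monotone i → Monotone j →
        (∀ a b, i a + 2 * m ≤ j b) →
        IndepFun (fun ω (a : Fin u) => Xm m (i a) ω)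
          (fun ω (b : Fin v) => Xm m (j b) ω) μ) :
    (∀ (u v : ℕ), 0 < u → 0 < v → ∀ r : ℝ, 0 ≤ r →
      ∀ (i : Fin u → ℝ) (j : Fin v → ℝ), Monotone i → Monotone j →
        (∀ a b, i a + r ≤ j b) →
        ∀ (F : (Fin u → EuclideanSpace ℝ (Fin n)) → ℝ)
          (G : (Fin v → EuclideanSpace ℝ (Fin n)) → ℝ) (LF LG : ℝ),
          Measurable F → Measurable G →
          (∀ x, |F x| ≤ 1) → (∀ x, |G x| ≤ 1) →
          Delta1Lip F LF → Delta1Lip G LG →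
          |cov μ (fun ω => F fun a => X (i a) ω) (fun ω => G fun b => X (j b) ω)| ≤
            2 * ((u : ℝ) * LF + (v : ℝ) * LG) * ψ (r / 2)) ∧
      (Tendsto ψ atTop (nhds 0) →
        EtaWeaklyDependent μ X (fun r => ψ (r / 2)) 2) := by
  have main : ∀ (u v : ℕ), 0 < u → 0 < v → ∀ r : ℝ, 0 ≤ r →
      ∀ (i : Fin u → ℝ) (j : Fin v → ℝ), Monotone i → Monotone j →
        (∀ a b, i a + r ≤ j b) →
        ∀ (F : (Fin u → EuclideanSpace ℝ (Fin n)) → ℝ)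
          (G : (Fin v → EuclideanSpace ℝ (Fin n)) → ℝ) (LF LG : ℝ),
          Measurable F → Measurable G →
          (∀ x, |F x| ≤ 1) → (∀ x, |G x| ≤ 1) →
          Delta1Lip F LF → Delta1Lip G LG →
          |cov μ (fun ω => F fun a => X (i a) ω) (fun ω => G fun b => X (j b) ω)| ≤
            2 * ((u : ℝ) * LF + (v : ℝ) * LG) * ψ (r / 2) := by
    intro u v hu hv r hr i j hi hj hij F G LF LG mF mG bF bG lF lG
    have hr2 : 0 ≤ r / 2 := by positivity
    have hind := hindep (r / 2) hr2 u v hu hv i j hi hj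
      (fun a b => by have := hij a b; linarith)
    have := cov_bound_aux μ (fun ω => F fun a => X (i a) ω) (fun ω => G fun b => X (j b) ω)
      (fun ω => F fun a => Xm (r / 2) (i a) ω) (fun ω => G fun b => Xm (r / 2) (j b) ω)
      (mF.comp (measurable_pi_lambda _ fun a => hX _))
      (mG.comp (measurable_pi_lambda _ fun a => hX _))
      (mF.comp (measurable_pi_lambda _ fun a => hXm _ _))
      (mG.comp (measurable_pi_lambda _ fun a => hXm _ _))
      (fun _ => bF _) (fun _ => bG _) (fun _ => bF _) (fun _ => bG _)
      (hind.comp mF mG) _ _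
      (lip_bound_aux μ (fun a => X (i a)) (fun a => Xm (r / 2) (i a)) _
        (fun a => happrox _ hr2 _) F LF lF)
      (lip_bound_aux μ (fun a => X (j a)) (fun a => Xm (r / 2) (j a)) _
        (fun a => happrox _ hr2 _) G LG lG)
    refine this.trans (le_of_eq ?_)
    ring
  refine ⟨main, fun hψ => ⟨by norm_num, fun r => hψ0 _, ?_, main⟩⟩
  exact hψ.comp (tendsto_id.atTop_div_const (by norm_num : (0 : ℝ) < 2))

end
end

section
/- Let (X_t)_{t∈ℝ} be an ℝ^n-valued process and ψ : [0,∞) → [0,∞) a function. Suppose that for every m ≥ 0 there is an ℝ^n-valued family (X_t^{(m)})_{t∈ℝ} on the same probability space such that (i) E‖X_t − X_t^{(m)}‖ ≤ ψ(m) for all t ∈ ℝ, and (ii) for all u,v ∈ ℕ* and all real indices i_1 ≤ … ≤ i_u and j_1 ≤ … ≤ j_v with j_1 − i_u ≥ m, the random vectors (X_{i_1},…,X_{i_u}) and (X^{(m)}_{j_1},…,X^{(m)}_{j_v}) are independent. Then for all u,v ∈ ℕ*, all r ≥ 0, all real indices i_1 ≤ … ≤ i_u ≤ i_u + r ≤ j_1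 ≤ … ≤ j_v, all bounded measurable F : (ℝ^n)^u → ℝ with ‖F‖_∞ ≤ 1, and all Lipschitz G : (ℝ^n)^v → ℝ with ‖G‖_∞ ≤ 1, one has |Cov(F(X_{i_1},…,X_{i_u}), G(X_{j_1},…,X_{j_v}))| ≤ 2 v Lip(G) ψ(r). Consequently, if ψ(m) → 0 as m → ∞, the process X is θ-weakly dependent with coefficients θ(r) = ψ(r) and constant 2. -/
open MeasureTheory ProbabilityTheory Filter

noncomputable section

/-- θ-weak dependence of a process with coefficients `θ` and constant `c₀`: `θ r → 0` and the
covariance of a bounded measurable functional of the past and a Lipschitz functional of the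
future, separated by a time gap `r`, is controlled by `c₀ v Lip(G) θ(r)`. -/
def ThetaWeaklyDependent {Ω : Type*} [MeasurableSpace Ω] (μ : Measure Ω)
    {E : Type*} [NormedAddCommGroup E] [MeasurableSpace E]
    (X : ℝ → Ω → E) (θ : ℝ → ℝ) (c₀ : ℝ) : Prop :=
  0 ≤ c₀ ∧ (∀ r, 0 ≤ θ r) ∧ Tendsto θ atTop (nhds 0) ∧
    ∀ (u v : ℕ), 0 < u → 0 < v → ∀ r : ℝ, 0 ≤ r →
      ∀ (i : Fin u → ℝ) (j : Fin v → ℝ), Monotone i → Monotone j →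
        (∀ a b, i a + r ≤ j b) →
        ∀ (F : (Fin u → E) → ℝ) (G : (Fin v → E) → ℝ) (LG : ℝ),
          Measurable F → Measurable G →
          (∀ x, |F x| ≤ 1) → (∀ x, |G x| ≤ 1) →
          Delta1Lip G LG →
          |cov μ (fun ω => F fun a => X (i a) ω) (fun ω => G fun b => X (j b) ω)| ≤
            c₀ * (v : ℝ) * LG * θ r

/-- Coupling criterion for θ-weak dependence: if for every `m ≥ 0` there is a family
`X^(m)` that is `ψ(m)`-close to `X` in `L¹` and such that the past of `X` is independent of
the future marginals of `X^(m)` at a gap `m`, then the θ-weak dependence inequality holds with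
`θ(r) = ψ(r)` and constant `2`. -/
theorem theta_weak_dependence_of_coupling
    {Ω : Type*} [MeasurableSpace Ω] (μ : Measure Ω) [IsProbabilityMeasure μ]
    {n : ℕ} (X : ℝ → Ω → EuclideanSpace ℝ (Fin n))
    (hX : ∀ t, Measurable (X t))
    (ψ : ℝ → ℝ) (hψ0 : ∀ m, 0 ≤ ψ m)
    (Xm : ℝ → ℝ → Ω → EuclideanSpace ℝ (Fin n))
    (hXm : ∀ m t, Measurable (Xm m t))
    (happrox : ∀ m, 0 ≤ m → ∀ t : ℝ,
      Integrable (fun ω => ‖X t ω - Xm m t ω‖) μ ∧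
        (∫ ω, ‖X t ω - Xm m t ω‖ ∂μ) ≤ ψ m)
    (hindep : ∀ m, 0 ≤ m → ∀ (u v : ℕ), 0 < u → 0 < v →
      ∀ (i : Fin u → ℝ) (j : Fin v → ℝ), Monotone i → Monotone j →
        (∀ a b, i a + m ≤ j b) →
        IndepFun (fun ω (a : Fin u) => X (i a) ω)
          (fun ω (b : Fin v) => Xm m (j b) ω) μ) :
    (∀ (u v : ℕ), 0 < u → 0 < v → ∀ r : ℝ, 0 ≤ r →
      ∀ (i : Fin u → ℝ) (j : Fin v → ℝ), Monotone i → Monotone j →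
        (∀ a b, i a + r ≤ j b) →
        ∀ (F : (Fin u → EuclideanSpace ℝ (Fin n)) → ℝ)
          (G : (Fin v → EuclideanSpace ℝ (Fin n)) → ℝ) (LG : ℝ),
          Measurable F → Measurable G →
          (∀ x, |F x| ≤ 1) → (∀ x, |G x| ≤ 1) →
          Delta1Lip G LG →
          |cov μ (fun ω => F fun a => X (i a) ω) (fun ω => G fun b => X (j b) ω)| ≤
            2 * (v : ℝ) * LG * ψ r) ∧
      (Tendsto ψ atTop (nhds 0) →
        ThetaWeaklyDependent μ X ψ 2) := by
  have key : ∀ (u v : ℕ), 0 < u → 0 < v → ∀ r : ℝ, 0 ≤ r →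
      ∀ (i : Fin u → ℝ) (j : Fin v → ℝ), Monotone i → Monotone j →
        (∀ a b, i a + r ≤ j b) →
        ∀ (F : (Fin u → EuclideanSpace ℝ (Fin n)) → ℝ)
          (G : (Fin v → EuclideanSpace ℝ (Fin n)) → ℝ) (LG : ℝ),
          Measurable F → Measurable G →
          (∀ x, |F x| ≤ 1) → (∀ x, |G x| ≤ 1) →
          Delta1Lip G LG →
          |cov μ (fun ω => F fun a => X (i a) ω) (fun ω => G fun b => X (j b) ω)| ≤
            2 * (v : ℝ) * LG * ψ r := by
    intro u v hu hv r hr i j hi hj hij F G LG hF hG hF1 hG1 hL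
    obtain ⟨hL0, hL⟩ := hL
    have hind := (hindep r hr u v hu hv i j hi hj hij).comp hF hG
    set U : Ω → ℝ := fun ω => F fun a => X (i a) ω with hU
    set V : Ω → ℝ := fun ω => G fun b => X (j b) ω with hV
    set W : Ω → ℝ := fun ω => G fun b => Xm r (j b) ω with hW
    have hUm : Measurable U := hF.comp (measurable_pi_lambda _ fun a => hX _)
    have hVm : Measurable V := hG.comp (measurable_pi_lambda _ fun a => hX _)
    have hWm : Measurable W := hG.comp (measurable_pi_lambda _ fun a => hXm _ _)
    have bdd : ∀ f : Ω → ℝ, Measurable f → (∀ ω, |f ω| ≤ 1) → Integrable f μ := by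
      intro f hf h1
      exact Integrable.of_bound hf.aestronglyMeasurable 1 (ae_of_all _ h1)
    have hU1 : ∀ ω, |U ω| ≤ 1 := fun ω => hF1 _
    have hV1 : ∀ ω, |V ω| ≤ 1 := fun ω => hG1 _
    have hW1 : ∀ ω, |W ω| ≤ 1 := fun ω => hG1 _
    have hmul : ∀ f g : ℝ, |f| ≤ 1 → |g| ≤ 1 → |f * g| ≤ 1 := by
      intro f g hf hg
      rw [abs_mul]
      exact mul_le_one₀ hf (abs_nonneg _) hg
    have iU := bdd U hUm hU1
    have iV := bdd V hVm hV1
    have iW := bdd W hWm hW1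
    have iUV := bdd (fun ω => U ω * V ω) (hUm.mul hVm) fun ω => hmul _ _ (hU1 ω) (hV1 ω)
    have iUW := bdd (fun ω => U ω * W ω) (hUm.mul hWm) fun ω => hmul _ _ (hU1 ω) (hW1 ω)
    have hUW : ∫ ω, U ω * W ω ∂μ = (∫ ω, U ω ∂μ) * ∫ ω, W ω ∂μ :=
      IndepFun.integral_fun_mul_eq_mul_integral hind
        hUm.aestronglyMeasurable hWm.aestronglyMeasurable
    have iD : Integrable (fun ω => |V ω - W ω|) μ := (iV.sub iW).abs
    have hD : ∫ ω, |V ω - W ω| ∂μ ≤ LG * (v * ψ r) := by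
      calc ∫ ω, |V ω - W ω| ∂μ
          ≤ ∫ ω, LG * ∑ b, ‖X (j b) ω - Xm r (j b) ω‖ ∂μ := by
            refine integral_mono iD ?_ fun ω => hL _ _
            exact (integrable_finset_sum _ fun b _ => (happrox r hr (j b)).1).const_mul _
        _ = LG * ∑ b, ∫ ω, ‖X (j b) ω - Xm r (j b) ω‖ ∂μ := by
            rw [integral_const_mul, integral_finset_sum _ fun b _ => (happrox r hr (j b)).1]
        _ ≤ LG * ∑ b : Fin v, ψ r := by
            gcongr with b
            exact (happrox r hr (j b)).2
        _ = LG * (v * ψ r) := by simp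
    have e1 : |(∫ ω, U ω * V ω ∂μ) - ∫ ω, U ω * W ω ∂μ| ≤ ∫ ω, |V ω - W ω| ∂μ := by
      rw [← integral_sub iUV iUW]
      refine (abs_integral_le_integral_abs).trans (integral_mono (iUV.sub iUW).abs iD fun ω => ?_)
      simp only
      rw [← mul_sub, abs_mul]
      exact mul_le_of_le_one_left (abs_nonneg _) (hU1 ω)
    have e2 : |(∫ ω, W ω ∂μ) - ∫ ω, V ω ∂μ| ≤ ∫ ω, |V ω - W ω| ∂μ := by
      rw [abs_sub_comm, ← integral_sub iV iW]
      exact abs_integral_le_integral_abs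
    have e3 : |∫ ω, U ω ∂μ| ≤ 1 := by
      refine abs_integral_le_integral_abs.trans ?_
      refine (integral_mono iU.abs (integrable_const 1) hU1).trans ?_
      simp
    have e4 : |(∫ ω, U ω ∂μ) * ((∫ ω, W ω ∂μ) - ∫ ω, V ω ∂μ)| ≤ ∫ ω, |V ω - W ω| ∂μ := by
      rw [abs_mul]
      exact (mul_le_of_le_one_left (abs_nonneg _) e3).trans e2
    have e5 : cov μ U V = ((∫ ω, U ω * V ω ∂μ) - ∫ ω, U ω * W ω ∂μ) +
        (∫ ω, U ω ∂μ) * ((∫ ω, W ω ∂μ) - ∫ ω, V ω ∂μ) := by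
      rw [hUW, cov]; ring
    rw [e5]
    refine (abs_add_le _ _).trans ?_
    linarith
  exact ⟨key, fun h => ⟨by norm_num, hψ0, h, key⟩⟩

end
end

section
/- Let X be an ℝ^n-valued random variable with E‖X‖^p < ∞ for some p > 1, let h : ℝ^n → ℝ^m satisfy the growth–Lipschitz condition with constants c > 0 and a, where 1 ≤ a < p, let M ≥ 1, and set X^{(M)} = X · 1_{{‖X‖ ≤ M}}. Then E‖h(X) − h(X^{(M)})‖ ≤ 3c · E[‖X‖^p] · M^{a−p}. -/
open MeasureTheory

noncomputable section

/-- Truncation bound: for a growth–Lipschitz `h` and the truncation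
`X^(M) = X 1_{‖X‖ ≤ M}`, one has `E‖h(X) - h(X^(M))‖ ≤ 3 c E[‖X‖^p] M^(a-p)`. -/
theorem truncation_growthLip_bound
    {Ω : Type*} [MeasurableSpace Ω] (μ : Measure Ω) [IsProbabilityMeasure μ]
    {n m : ℕ} (X : Ω → EuclideanSpace ℝ (Fin n)) (hX : Measurable X)
    (p : ℝ) (hp : 1 < p)
    (hint : Integrable (fun ω => ‖X ω‖ ^ p) μ)
    (h : EuclideanSpace ℝ (Fin n) → EuclideanSpace ℝ (Fin m))
    (c a : ℝ) (hc : 0 < c) (ha : 1 ≤ a) (hap : a < p)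
    (hGL : GrowthLip h c a)
    (M : ℝ) (hM : 1 ≤ M) :
    (∫ ω, ‖h (X ω) - h (if ‖X ω‖ ≤ M then X ω else 0)‖ ∂μ) ≤
      3 * c * (∫ ω, ‖X ω‖ ^ p ∂μ) * M ^ (a - p) := by
  rw [mul_right_comm, ← integral_const_mul]
  refine integral_mono_of_nonneg (Filter.Eventually.of_forall fun _ => norm_nonneg _)
    (hint.const_mul _) (Filter.Eventually.of_forall fun ω => ?_)
  have hM0 : 0 < M := by linarith
  have hMp : 0 < M ^ (a - p) := Real.rpow_pos_of_pos hM0 _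
  by_cases hx : ‖X ω‖ ≤ M
  · simp only [hx, if_true, sub_self, norm_zero]
    positivity
  · simp only [hx, if_false]
    push Not at hx
    have h1 := hGL.2 (X ω) 0
    rw [sub_zero, norm_zero] at h1
    set r := ‖X ω‖ with hr
    have hr1 : 1 ≤ r := by linarith
    have hr0 : 0 < r := by linarith
    have h2 : (0 : ℝ) ^ (a - 1) ≤ 1 := Real.zero_rpow_le_one _
    have h3 : 1 ≤ r ^ (a - 1) := Real.one_le_rpow hr1 (by linarith)
    have h4 : r * r ^ (a - 1) = r ^ p * r ^ (a - p) := by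
      rw [← Real.rpow_add hr0, ← Real.rpow_one_add' hr0.le (by linarith)]
      congr 1
      ring
    have h5 : r ^ (a - p) ≤ M ^ (a - p) :=
      Real.rpow_le_rpow_of_nonpos hM0 hx.le (by linarith)
    calc _ ≤ c * r * (1 + r ^ (a - 1) + 0 ^ (a - 1)) := h1
      _ ≤ c * r * (3 * r ^ (a - 1)) := by
        gcongr
        linarith
      _ = 3 * c * (r * r ^ (a - 1)) := by ring
      _ = 3 * c * (r ^ p * r ^ (a - p)) := by rw [h4]
      _ ≤ 3 * c * (r ^ p * M ^ (a - p)) := by gcongr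
      _ = 3 * c * M ^ (a - p) * r ^ p := by ring

end
end

section
/- Let ξ be a random variable with the Gamma distribution with shape parameter α and rate 1 (density x^{α−1} e^{−x} / Γ(α) on (0,∞)). If α > 3 and s ≤ 0, then E[ (e^{sξ} − 1 − sξ) · ξ^{−3} ] = ( (1 − s)^{3−α} − 1 − s(α−3) ) / ( (α−1)(α−2)(α−3) ). In particular, with s = BΔ for B < 0 and Δ > 0, this gives the integral appearing in the variance of squared returns of the supOU stochastic volatility model: ∫₀^∞ (e^{BΔx} − 1 − BΔx) x^{α−4} e^{−x} / Γ(α) dx = ( (1 − BΔ)^{3−α} − 1 − ΔB(α−3) ) / ( (α−1)(α−2)(α−3) ). -/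
open MeasureTheory ProbabilityTheory Real

noncomputable section

lemma integrableOn_aux {a r : ℝ} (ha : 0 < a) (hr : 0 < r) :
    IntegrableOn (fun x : ℝ => x ^ (a - 1) * exp (-(r * x))) (Set.Ioi 0) := by
  have h := integrableOn_rpow_mul_exp_neg_mul_rpow (p := 1) (s := a - 1) (b := r)
    (by linarith) one_pos hr
  simpa using h

lemma integral_aux (α : ℝ) (hα : 3 < α) (s : ℝ) (hs : s ≤ 0) :
    (∫ x in Set.Ioi (0 : ℝ), (exp (s * x) - 1 - s * x) * x ^ (α - 4) * exp (-x) / Gamma α) =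
      ((1 - s) ^ (3 - α) - 1 - s * (α - 3)) / ((α - 1) * (α - 2) * (α - 3)) := by
  have h3 : 0 < α - 3 := by linarith
  have h2 : 0 < α - 2 := by linarith
  have h1 : 0 < α - 1 := by linarith
  have hr : 0 < 1 - s := by linarith
  have hG2 : Gamma (α - 2) = (α - 3) * Gamma (α - 3) := by
    rw [← Real.Gamma_add_one h3.ne']; ring_nf
  have hG1 : Gamma (α - 1) = (α - 2) * Gamma (α - 2) := by
    rw [← Real.Gamma_add_one h2.ne']; ring_nf
  have hG0 : Gamma α = (α - 1) * Gamma (α - 1) := by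
    rw [← Real.Gamma_add_one h1.ne']; ring_nf
  have hGpos : 0 < Gamma (α - 3) := Real.Gamma_pos_of_pos h3
  have i1 := integrableOn_aux h3 hr
  have i2 := integrableOn_aux h3 one_pos
  have i3 := (integrableOn_aux h2 one_pos).const_mul s
  have e : ∀ x ∈ Set.Ioi (0 : ℝ),
      (exp (s * x) - 1 - s * x) * x ^ (α - 4) * exp (-x) / Gamma α =
      (x ^ (α - 3 - 1) * exp (-((1 - s) * x)) - x ^ (α - 3 - 1) * exp (-(1 * x))
        - s * (x ^ (α - 2 - 1) * exp (-(1 * x)))) / Gamma α := by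
    intro x hx
    have hx : 0 < x := hx
    have p1 : α - 3 - 1 = α - 4 := by ring
    have p2 : x ^ (α - 2 - 1) = x ^ (α - 4) * x := by
      rw [← Real.rpow_add_one hx.ne']; ring_nf
    have p3 : exp (-((1 - s) * x)) = exp (s * x) * exp (-x) := by
      rw [← Real.exp_add]; ring_nf
    rw [p1, p2, p3, one_mul]
    ring
  rw [setIntegral_congr_fun measurableSet_Ioi e, integral_div,
    integral_sub (by exact i1.sub i2) i3, integral_sub i1 i2, integral_const_mul,
    integral_rpow_mul_exp_neg_mul_Ioi h3 hr, integral_rpow_mul_exp_neg_mul_Ioi h3 one_pos,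
    integral_rpow_mul_exp_neg_mul_Ioi h2 one_pos]
  have p4 : (1 / (1 - s)) ^ (α - 3) = (1 - s) ^ (3 - α) := by
    rw [one_div, Real.inv_rpow hr.le, ← Real.rpow_neg hr.le]; ring_nf
  rw [p4, hG0, hG1, hG2]
  simp only [div_one, Real.one_rpow]
  field_simp

lemma integral_gammaMeasure_aux (α : ℝ) (hα : 3 < α) (s : ℝ) :
    (∫ x, (exp (s * x) - 1 - s * x) * x ^ (-(3 : ℝ)) ∂(gammaMeasure α 1)) =
      ∫ x in Set.Ioi (0 : ℝ), (exp (s * x) - 1 - s * x) * x ^ (α - 4) * exp (-x) / Gamma α := by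
  have hm : Measurable (gammaPDF α 1) := (measurable_gammaPDFReal α 1).ennreal_ofReal
  rw [gammaMeasure, integral_withDensity_eq_integral_toReal_smul hm
    (Filter.Eventually.of_forall fun x => ENNReal.ofReal_lt_top),
    ← integral_indicator measurableSet_Ioi]
  congr 1
  ext x
  rw [gammaPDF, ENNReal.toReal_ofReal (gammaPDFReal_nonneg (by linarith) one_pos x), smul_eq_mul]
  rcases lt_trichotomy x 0 with hx | hx | hx
  · rw [gammaPDFReal, if_neg (by linarith), Set.indicator_of_notMem (by simpa using hx.le)]
    simp
  · subst hx
    simp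
  · rw [gammaPDFReal, if_pos hx.le, Set.indicator_of_mem (by simpa using hx)]
    have p : x ^ (α - 4) = x ^ (α - 1) * x ^ (-(3 : ℝ)) := by
      rw [← Real.rpow_add hx]; ring_nf
    rw [p, Real.one_rpow, one_mul]
    ring

/-- Identity for the Gamma distribution appearing in the variance of squared returns of the
supOU stochastic volatility model: for a `Γ(α,1)`-distributed `ξ` with `α > 3` and `s ≤ 0`,
`E[(e^{sξ} - 1 - sξ) ξ^{-3}] = ((1-s)^{3-α} - 1 - s(α-3))/((α-1)(α-2)(α-3))`; in particular
with `s = BΔ`, `B < 0`, `Δ > 0`, the corresponding integral formula holds. -/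
theorem gamma_centered_exponential_third_negative_moment
    {Ω : Type*} [MeasurableSpace Ω] (μ : Measure Ω) [IsProbabilityMeasure μ]
    (ξ : Ω → ℝ) (hξ : Measurable ξ)
    (α : ℝ) (hα : 3 < α)
    (hlaw : μ.map ξ = gammaMeasure α 1)
    (s : ℝ) (hs : s ≤ 0)
    (B Δ : ℝ) (hB : B < 0) (hΔ : 0 < Δ) :
    (∫ ω, (exp (s * ξ ω) - 1 - s * ξ ω) * ξ ω ^ (-(3 : ℝ)) ∂μ) =
        ((1 - s) ^ (3 - α) - 1 - s * (α - 3)) / ((α - 1) * (α - 2) * (α - 3)) ∧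
      (∫ x in Set.Ioi (0 : ℝ),
          (exp (B * Δ * x) - 1 - B * Δ * x) * x ^ (α - 4) * exp (-x) / Gamma α) =
        ((1 - B * Δ) ^ (3 - α) - 1 - Δ * B * (α - 3)) / ((α - 1) * (α - 2) * (α - 3)) := by
  refine ⟨?_, ?_⟩
  · rw [← integral_aux α hα s hs, ← integral_gammaMeasure_aux α hα s, ← hlaw,
      integral_map hξ.aemeasurable]
    exact Measurable.aestronglyMeasurable (by fun_prop)
  · rw [integral_aux α hα (B * Δ) (mul_neg_of_neg_of_pos hB hΔ).le, mul_comm Δ B]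

end
end
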